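/- (F-score oracle.) Fix β > 0 and let θ* be the unique root of θ ↦ β²θ − ∑_{ℓ=1}^L ∫ max(p_ℓ(x) − θ, 0) dμ(x). Define the set-valued classifier Γ*_F by Γ*_F(x) = {ℓ ∈ Fin L : p_ℓ(x) ≥ θ*}. Then Γ*_F maximizes the F_β-score: for every set-valued classifier Γ, F_β(Γ) ≤ F_β(Γ*_F), where F_β(Γ) = (1 + β²)(1 − error(Γ)) / (β² + size(Γ)). -/

import Mathlib

open MeasureTheory Finset

/-!
For every `θ`, the Lagrangian `P(Y ∈ Γ(X)) - θ * E|Γ(X)| = ∫ ∑_{ℓ ∈ Γ(x)} (p_ℓ(x) - θ) dμ(x)` is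
maximized pointwise by keeping exactly the labels with `p_ℓ(x) ≥ θ`, and its maximum is
`∑_ℓ ∫ (p_ℓ - θ)₊ dμ`. When `θ` is the root, this maximum equals `β² θ`. Hence
`P(Y ∈ Γ(X)) ≤ θ (β² + E|Γ(X)|)`, that is `F_β(Γ) ≤ (1 + β²) θ`, with equality for the threshold
classifier.
-/

section FinsetSum

variable {ι M : Type*} [Fintype ι] [AddCommMonoid M] [LinearOrder M]

theorem sum_le_sum_univ_max_zero [IsOrderedAddMonoid M] (s : Finset ι) (f : ι → M) :
    ∑ i ∈ s, f i ≤ ∑ i, max (f i) 0 :=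
  calc ∑ i ∈ s, f i
    _ ≤ ∑ i ∈ s, max (f i) 0 := sum_le_sum fun _ _ ↦ le_max_left _ _
    _ ≤ ∑ i, max (f i) 0 := sum_le_univ_sum_of_nonneg fun _ ↦ le_max_right _ _

theorem sum_filter_nonneg_eq_sum_max_zero (f : ι → M) :
    ∑ i with 0 ≤ f i, f i = ∑ i, max (f i) 0 := by
  simp only [sum_filter, max_comm _ (0 : M), max_def]

end FinsetSum

section Integrability

variable {𝒳 ι : Type*} [MeasurableSpace 𝒳] {μ : Measure 𝒳}

theorem integrable_sum_mem [Finite ι] {E : Type*} [NormedAddCommGroup E] {f : 𝒳 → ι → E}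
    {Γ : 𝒳 → Finset ι} (hf : ∀ i, Integrable (f · i) μ)
    (hΓ : ∀ i, NullMeasurableSet {x | i ∈ Γ x} μ) :
    Integrable (fun x ↦ ∑ i ∈ Γ x, f x i) μ := by
  classical
  cases nonempty_fintype ι
  have sum_eq_sum_indicator (x : 𝒳) :
      ∑ i ∈ Γ x, f x i = ∑ i, {x | i ∈ Γ x}.indicator (f · i) x := by
    simp [Set.indicator_apply, sum_ite_mem]
  simp only [sum_eq_sum_indicator]
  exact integrable_finsetSum _ fun i _ ↦ (hf i).indicator₀ (hΓ i)

theorem integrable_of_ae_mem_stdSimplex [Fintype ι] [IsFiniteMeasure μ] {p : 𝒳 → ι → ℝ}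
    (hp : AEMeasurable p μ) (hmem : ∀ᵐ x ∂μ, p x ∈ stdSimplex ℝ ι) (i : ι) :
    Integrable (p · i) μ :=
  .of_mem_Icc 0 1 (aemeasurable_pi_iff.mp hp i) <|
    hmem.mono fun _ hx ↦ mem_Icc_of_mem_stdSimplex hx i

end Integrability

section Classifier

variable {𝒳 ι : Type*}

/-- The set-valued classifier keeping the labels whose score is at least `θ`. -/
noncomputable def thresholdClassifier [Fintype ι] (p : 𝒳 → ι → ℝ) (θ : ℝ) (x : 𝒳) : Finset ι :=
  {ℓ | θ ≤ p x ℓ}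

variable [MeasurableSpace 𝒳]

/-- The error rate `P(Y ∉ Γ(X))` of a set-valued classifier `Γ`, expressed through the law `μ` of
`X` and the conditional class probabilities `p`. -/
noncomputable def errorRate (μ : Measure 𝒳) (p : 𝒳 → ι → ℝ) (Γ : 𝒳 → Finset ι) : ℝ :=
  ∫ x, (1 - ∑ ℓ ∈ Γ x, p x ℓ) ∂μ

/-- The average size `E|Γ(X)|` of a set-valued classifier `Γ`. -/
noncomputable def averageSize (μ : Measure 𝒳) (Γ : 𝒳 → Finset ι) : ℝ :=
  ∫ x, ((Γ x).card : ℝ) ∂μ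

/-- The `F_β`-score of a set-valued classifier `Γ`: the weighted harmonic mean of its precision
`P(Y ∈ Γ(X)) / E|Γ(X)|` and its recall `P(Y ∈ Γ(X))`. -/
noncomputable def fScore (μ : Measure 𝒳) (p : 𝒳 → ι → ℝ) (β : ℝ) (Γ : 𝒳 → Finset ι) : ℝ :=
  (1 + β ^ 2) * (1 - errorRate μ p Γ) / (β ^ 2 + averageSize μ Γ)

variable {μ : Measure 𝒳} {p : 𝒳 → ι → ℝ} {Γ : 𝒳 → Finset ι} {β θ : ℝ}

theorem averageSize_nonneg : 0 ≤ averageSize μ Γ :=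
  integral_nonneg fun _ ↦ Nat.cast_nonneg _

theorem sq_add_averageSize_pos (hβ : β ≠ 0) : 0 < β ^ 2 + averageSize μ Γ :=
  add_pos_of_pos_of_nonneg (sq_pos_of_ne_zero hβ) averageSize_nonneg

theorem nullMeasurableSet_mem_thresholdClassifier [Fintype ι] {ℓ : ι}
    (hp : AEMeasurable (p · ℓ) μ) :
    NullMeasurableSet {x | ℓ ∈ thresholdClassifier p θ x} μ := by
  simpa [thresholdClassifier] using nullMeasurableSet_le aemeasurable_const hp

theorem one_sub_errorRate [Finite ι] [IsProbabilityMeasure μ]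
    (hp : ∀ ℓ, Integrable (p · ℓ) μ) (hΓ : ∀ ℓ, NullMeasurableSet {x | ℓ ∈ Γ x} μ) :
    1 - errorRate μ p Γ = ∫ x, ∑ ℓ ∈ Γ x, p x ℓ ∂μ := by
  simp [errorRate, integral_sub (integrable_const 1) (integrable_sum_mem hp hΓ)]

section Lagrangian

variable [IsFiniteMeasure μ]

theorem integral_sum_mem_eq_mul_averageSize_add [Finite ι] (hp : ∀ ℓ, Integrable (p · ℓ) μ)
    (hΓ : ∀ ℓ, NullMeasurableSet {x | ℓ ∈ Γ x} μ) (θ : ℝ) :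
    ∫ x, ∑ ℓ ∈ Γ x, p x ℓ ∂μ =
      θ * averageSize μ Γ + ∫ x, ∑ ℓ ∈ Γ x, (p x ℓ - θ) ∂μ := by
  have integrable_card : Integrable (fun x ↦ ((Γ x).card : ℝ)) μ := by
    simpa using integrable_sum_mem (f := fun _ _ ↦ (1 : ℝ)) (fun _ ↦ integrable_const _) hΓ
  have integrable_excess : Integrable (fun x ↦ ∑ ℓ ∈ Γ x, (p x ℓ - θ)) μ :=
    integrable_sum_mem (fun ℓ ↦ (hp ℓ).sub (integrable_const θ)) hΓ
  rw [averageSize, ← integral_const_mul,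
    ← integral_add (integrable_card.const_mul θ) integrable_excess]
  simp [sum_sub_distrib, mul_comm]

theorem integrable_max_sub_zero {f : 𝒳 → ℝ} (hf : Integrable f μ) (θ : ℝ) :
    Integrable (fun x ↦ max (f x - θ) 0) μ :=
  (hf.sub (integrable_const θ)).pos_part

variable [Fintype ι]

theorem integral_sum_mem_sub_le (hp : ∀ ℓ, Integrable (p · ℓ) μ)
    (hΓ : ∀ ℓ, NullMeasurableSet {x | ℓ ∈ Γ x} μ) (θ : ℝ) :
    ∫ x, ∑ ℓ ∈ Γ x, (p x ℓ - θ) ∂μ ≤ ∑ ℓ, ∫ x, max (p x ℓ - θ) 0 ∂μ := by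
  have integrable_pos (ℓ : ι) := integrable_max_sub_zero (hp ℓ) θ
  rw [← integral_finsetSum _ fun ℓ _ ↦ integrable_pos ℓ]
  exact integral_mono (integrable_sum_mem (fun ℓ ↦ (hp ℓ).sub (integrable_const θ)) hΓ)
    (integrable_finsetSum _ fun ℓ _ ↦ integrable_pos ℓ) fun _ ↦ sum_le_sum_univ_max_zero _ _

theorem integral_sum_thresholdClassifier_sub (hp : ∀ ℓ, Integrable (p · ℓ) μ) (θ : ℝ) :
    ∫ x, ∑ ℓ ∈ thresholdClassifier p θ x, (p x ℓ - θ) ∂μ =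
      ∑ ℓ, ∫ x, max (p x ℓ - θ) 0 ∂μ := by
  rw [← integral_finsetSum _ fun ℓ _ ↦ integrable_max_sub_zero (hp ℓ) θ]
  simp only [thresholdClassifier, ← sum_filter_nonneg_eq_sum_max_zero, sub_nonneg]

end Lagrangian

variable [Fintype ι] [IsProbabilityMeasure μ]

theorem fScore_le (hp : ∀ ℓ, Integrable (p · ℓ) μ)
    (hΓ : ∀ ℓ, NullMeasurableSet {x | ℓ ∈ Γ x} μ) (hβ : β ≠ 0)
    (hθ : β ^ 2 * θ = ∑ ℓ, ∫ x, max (p x ℓ - θ) 0 ∂μ) :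
    fScore μ p β Γ ≤ (1 + β ^ 2) * θ := by
  have coverage_le : 1 - errorRate μ p Γ ≤ θ * (β ^ 2 + averageSize μ Γ) := by
    rw [one_sub_errorRate hp hΓ, integral_sum_mem_eq_mul_averageSize_add hp hΓ θ]
    linarith [integral_sum_mem_sub_le hp hΓ θ]
  rw [fScore, mul_div_assoc]
  gcongr
  exact (div_le_iff₀ (sq_add_averageSize_pos hβ)).mpr coverage_le

theorem fScore_thresholdClassifier (hp : ∀ ℓ, Integrable (p · ℓ) μ) (hβ : β ≠ 0)
    (hθ : β ^ 2 * θ = ∑ ℓ, ∫ x, max (p x ℓ - θ) 0 ∂μ) :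
    fScore μ p β (thresholdClassifier p θ) = (1 + β ^ 2) * θ := by
  have hΓ (ℓ : ι) := nullMeasurableSet_mem_thresholdClassifier (θ := θ) (hp ℓ).aemeasurable
  have coverage_eq : 1 - errorRate μ p (thresholdClassifier p θ) =
      θ * (β ^ 2 + averageSize μ (thresholdClassifier p θ)) := by
    rw [one_sub_errorRate hp hΓ, integral_sum_mem_eq_mul_averageSize_add hp hΓ θ,
      integral_sum_thresholdClassifier_sub hp, ← hθ]
    ring
  rw [fScore, coverage_eq, ← mul_assoc, mul_div_cancel_right₀ _ (sq_add_averageSize_pos hβ).ne']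

theorem fscore_oracle_general (hp : ∀ ℓ, Integrable (p · ℓ) μ)
    (hΓ : ∀ ℓ, NullMeasurableSet {x | ℓ ∈ Γ x} μ) (hβ : β ≠ 0)
    (hθ : β ^ 2 * θ = ∑ ℓ, ∫ x, max (p x ℓ - θ) 0 ∂μ) :
    fScore μ p β Γ ≤ fScore μ p β (thresholdClassifier p θ) :=
  (fScore_le hp hΓ hβ hθ).trans_eq (fScore_thresholdClassifier hp hβ hθ).symm

end Classifier

/-- F-score oracle: the thresholding classifier at the unique
root θ* of θ ↦ β²θ − ∑_ℓ ∫ (p_ℓ(x) − θ)₊ dμ(x) maximizes the F_β-score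
F_β(Γ) = (1 + β²)(1 − error(Γ)) / (β² + size(Γ)). -/
theorem fscore_oracle
    {𝒳 : Type*} [m𝒳 : MeasurableSpace 𝒳] (μ : Measure 𝒳) [IsProbabilityMeasure μ]
    (L : ℕ) (hL : 1 ≤ L)
    (p : 𝒳 → Fin L → ℝ) (hp : Measurable p)
    (hp0 : ∀ x ℓ, 0 ≤ p x ℓ) (hpsum : ∀ x, ∑ ℓ, p x ℓ = 1)
    (β : ℝ) (hβ : 0 < β)
    (θstar : ℝ)
    (hθstar : β ^ 2 * θstar - ∑ ℓ : Fin L, ∫ x, max (p x ℓ - θstar) 0 ∂μ = 0)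
    (Γstar : 𝒳 → Finset (Fin L))
    (hΓstar : ∀ x, Γstar x = Finset.univ.filter (fun ℓ => θstar ≤ p x ℓ))
    (Γ : 𝒳 → Finset (Fin L))
    (hΓMeas : @Measurable 𝒳 (Finset (Fin L)) m𝒳 ⊤ Γ) :
    (1 + β ^ 2) * (1 - ∫ x, (1 - ∑ ℓ ∈ Γ x, p x ℓ) ∂μ) /
        (β ^ 2 + ∫ x, ((Γ x).card : ℝ) ∂μ) ≤
      (1 + β ^ 2) * (1 - ∫ x, (1 - ∑ ℓ ∈ Γstar x, p x ℓ) ∂μ) /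
        (β ^ 2 + ∫ x, ((Γstar x).card : ℝ) ∂μ) := by
  obtain rfl : Γstar = thresholdClassifier p θstar := funext hΓstar
  exact fscore_oracle_general
    (integrable_of_ae_mem_stdSimplex hp.aemeasurable (.of_forall fun x ↦ ⟨hp0 x, hpsum x⟩))
    (fun ℓ ↦ (hΓMeas (t := {s | ℓ ∈ s}) trivial).nullMeasurableSet) hβ.ne' (sub_eq_zero.mp hθstar)
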